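/- Let m ≥ 4 and let e be an integer with 1 ≤ e < m/2 such that m/gcd(m,e) is even, and set ℓ = 2·gcd(m,e). Then the dual code C̄_E^⊥ has dimension 2m + 1 over F_2 and minimum nonzero Hamming weight 2^{m−1} − 2^{(m+ℓ−2)/2}, with weight distribution: the number of codewords of weight 0 is 1; of weight 2^{m−1} − 2^{(m+ℓ−2)/2} is 2^{m−ℓ}(2^m − 1)/(2^{ℓ/2} + 1); of weight 2^{m−1} − 2^{(m−2)/2} is 2^{(2m+ℓ)/2}(2^m − 1)/(2^{ℓ/2} + 1); of weight 2^{m−1} is 2((2^{ℓ/2} − 1)·2^{m−ℓ} + 1)(2^m − 1); of weight 2^{m−1} + 2^{(m−2)/2} is 2^{(2m+ℓ)/2}(2^m − 1)/(2^{ℓ/2} + 1); of weight 2^{m−1} + 2^{(m+ℓ−2)/2} is 2^{m−ℓ}(2^m − 1)/(2^{ℓ/2} + 1); of weight 2^m is 1; and there are no codewords of any other weight. Moreover, the extended code C̄_E has length 2^m, dimension 2^m − 1 − 2m, and minimum nonzero Hamming weight 4 if gcd(e,m) > 1 and 6 if gcd(e,m) = 1. -/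

import Mathlib

open Polynomial Finset

/-- The polynomial `c₀ + c₁x + ⋯ + c_{n−1}x^{n−1}` associated to a vector. -/
noncomputable def codePoly {n : ℕ} (c : Fin n → ZMod 2) : Polynomial (ZMod 2) :=
  ∑ i : Fin n, Polynomial.C (c i) * Polynomial.X ^ (i : ℕ)

/-- The generator polynomial `g_E(x) = M_α(x) · M_{α^{1+2^e}}(x)`. -/
noncomputable def gE (m e : ℕ) (α : GaloisField 2 m) : Polynomial (ZMod 2) :=
  minpoly (ZMod 2) α * minpoly (ZMod 2) (α ^ (1 + 2 ^ e))

/-- The binary cyclic code `C_E` of length `2^m − 1` with generator polynomial `g_E`. -/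
def CE (m e : ℕ) (α : GaloisField 2 m) : Set (Fin (2 ^ m - 1) → ZMod 2) :=
  {c | gE m e α ∣ codePoly c}

/-- The extended code `C̄_E ⊆ F_2^{2^m}`: the first `2^m − 1` coordinates form a codeword
of `C_E` and all `2^m` coordinates sum to zero. -/
def CEbar (m e : ℕ) (α : GaloisField 2 m) : Set (Fin (2 ^ m) → ZMod 2) :=
  {c | (fun i : Fin (2 ^ m - 1) => c (Fin.castLE (Nat.sub_le _ _) i)) ∈ CE m e α ∧
       ∑ i, c i = 0}

/-- The dual of a set of vectors over a commutative ring, as a submodule. -/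
def dualCode {n : ℕ} {F : Type*} [CommRing F] (C : Set (Fin n → F)) :
    Submodule F (Fin n → F) where
  carrier := {y | ∀ c ∈ C, ∑ i, y i * c i = 0}
  add_mem' := by
    intro a b ha hb c hc
    have h1 := ha c hc
    have h2 := hb c hc
    simp only [Pi.add_apply, add_mul, Finset.sum_add_distrib, h1, h2, add_zero]
  zero_mem' := by intro c hc; simp
  smul_mem' := by
    intro r a ha c hc
    have h1 := ha c hc
    simp only [Pi.smul_apply, smul_eq_mul, mul_assoc, ← Finset.mul_sum, h1, mul_zero]

lemma codePoly_add {n : ℕ} (a b : Fin n → ZMod 2) :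
    codePoly (fun i => a i + b i) = codePoly a + codePoly b := by
  simp [codePoly, Finset.sum_add_distrib, add_mul]

lemma codePoly_smul {n : ℕ} (r : ZMod 2) (a : Fin n → ZMod 2) :
    codePoly (fun i => r * a i) = Polynomial.C r * codePoly a := by
  simp [codePoly, Finset.mul_sum, mul_assoc]

/-- The extended code `C̄_E`, as an `F_2`-submodule of `F_2^{2^m}`. -/
noncomputable def CEbarSub (m e : ℕ) (α : GaloisField 2 m) :
    Submodule (ZMod 2) (Fin (2 ^ m) → ZMod 2) where
  carrier := CEbar m e α
  add_mem' := by
    rintro a b ⟨ha1, ha2⟩ ⟨hb1, hb2⟩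
    refine ⟨?_, ?_⟩
    · show gE m e α ∣
        codePoly (fun i : Fin (2 ^ m - 1) => (a + b) (Fin.castLE (Nat.sub_le _ _) i))
      have h : (fun i : Fin (2 ^ m - 1) => (a + b) (Fin.castLE (Nat.sub_le _ _) i)) =
          (fun i : Fin (2 ^ m - 1) =>
            a (Fin.castLE (Nat.sub_le _ _) i) + b (Fin.castLE (Nat.sub_le _ _) i)) := rfl
      rw [h, codePoly_add]
      exact dvd_add ha1 hb1
    · simp only [Pi.add_apply, Finset.sum_add_distrib, ha2, hb2, add_zero]
  zero_mem' := by
    refine ⟨?_, by simp⟩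
    show gE m e α ∣
      codePoly (fun i : Fin (2 ^ m - 1) => (0 : Fin (2 ^ m) → ZMod 2) (Fin.castLE (Nat.sub_le _ _) i))
    have h : (fun i : Fin (2 ^ m - 1) => (0 : Fin (2 ^ m) → ZMod 2) (Fin.castLE (Nat.sub_le _ _) i)) =
        (fun _ : Fin (2 ^ m - 1) => (0 : ZMod 2)) := rfl
    rw [h]
    simp [codePoly]
  smul_mem' := by
    rintro r a ⟨ha1, ha2⟩
    refine ⟨?_, ?_⟩
    · show gE m e α ∣
        codePoly (fun i : Fin (2 ^ m - 1) => (r • a) (Fin.castLE (Nat.sub_le _ _) i))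
      have h : (fun i : Fin (2 ^ m - 1) => (r • a) (Fin.castLE (Nat.sub_le _ _) i)) =
          (fun i : Fin (2 ^ m - 1) => r * a (Fin.castLE (Nat.sub_le _ _) i)) := rfl
      rw [h, codePoly_smul]
      exact Dvd.dvd.mul_left ha1 _
    · simp only [Pi.smul_apply, smul_eq_mul, ← Finset.mul_sum, ha2, mul_zero]

/-
The dual of `C̄_E` consists of the evaluations of all `x ↦ Tr(a x^(1+2^e)) + Tr(b x) + c`, so its
weights are given by the Walsh coefficients of the quadratic forms `Q_a(x) = Tr(a x^(1+2^e))`.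
The square of a Walsh coefficient of `Q_a` is `0` or `2^m · |rad Q_a|`, and Parseval's identity
tells how often each value occurs. The radical of `Q_a` is the set of solutions of
`a^(2^e) x^(2^(2e)) = a x`, which for `a ≠ 0` has either `1` or `2^gcd(m, 2e)` elements. Since
every `x ≠ 0` lies in the radical of exactly `2^gcd(m, e)` of the forms, counting the pairs
`(a, x)` with `x ∈ rad Q_a` in two ways determines how often each size occurs.

A word of `C̄_E` is a set `S ⊆ F` of even size with `∑ x = ∑ x^(1+2^e) = 0` over `S`. Such a set
with four elements exists only if `x ↦ x^(2^e)` fixes more than `0` and `1`. One with at most six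
elements always exists: there are more 3-subsets of `F` than pairs of sums, and the symmetric
difference of two 3-subsets with the same sums is such a set.
-/

section SignCharacter

/-- The additive character `x ↦ (-1)^x` of `𝔽₂`, with values in `ℤ`. -/
def signChar : AddChar (ZMod 2) ℤ := AddChar.zmodChar 2 neg_one_sq

lemma signChar_mul_self (x : ZMod 2) : signChar x * signChar x = 1 := by
  revert x; decide

lemma signChar_injective : Function.Injective signChar := by decide

lemma sum_signChar_eq_zero {V : Type*} [AddCommGroup V] [Module (ZMod 2) V] [Fintype V]
    {φ : Module.Dual (ZMod 2) V} (hφ : φ ≠ 0) : ∑ x, signChar (φ x) = 0 := by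
  refine AddChar.sum_eq_zero_of_ne_one (ψ := signChar.compAddMonoidHom φ.toAddMonoidHom)
    fun h => hφ (LinearMap.ext fun x => signChar_injective ?_)
  simpa using DFunLike.congr_fun h x

lemma sum_signChar_eq_card_sub {ι : Type*} [Fintype ι] (y : ι → ZMod 2) :
    ∑ i, signChar (y i) = Fintype.card ι - 2 * hammingNorm y := by
  have signChar_eq : ∀ x : ZMod 2, signChar x = 1 - 2 * if x ≠ 0 then 1 else 0 := by decide
  simp only [signChar_eq, hammingNorm, Finset.sum_sub_distrib, ← Finset.mul_sum,
    Finset.sum_boole, Finset.sum_const, Finset.card_univ, nsmul_eq_mul, mul_one]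

end SignCharacter

section Walsh

variable {V W : Type*} [AddCommGroup V] [Module (ZMod 2) V] [Fintype V]

/-- The Walsh (Hadamard–Fourier) coefficient at the linear functional `φ` of a Boolean function
`f` on an `𝔽₂`-vector space. -/
def walsh (f : V → ZMod 2) (φ : Module.Dual (ZMod 2) V) : ℤ :=
  ∑ x, signChar (f x + φ x)

lemma walsh_sq (f : V → ZMod 2) (φ : Module.Dual (ZMod 2) V) :
    walsh f φ ^ 2 = ∑ x, ∑ y, signChar (f x + f (x + y)) * signChar (φ y) := by
  rw [sq, walsh, Finset.sum_mul_sum]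
  refine Finset.sum_congr rfl fun x _ => ?_
  rw [← Equiv.sum_comp (Equiv.addLeft x)]
  refine Finset.sum_congr rfl fun y _ => ?_
  rw [Equiv.coe_addLeft, map_add φ, ← AddChar.map_add_eq_mul, ← AddChar.map_add_eq_mul]
  congr 1
  linear_combination CharTwo.add_self_eq_zero (φ x)

lemma sum_walsh_sq [Fintype W] [AddCommGroup W] [Module (ZMod 2) W]
    {B : W →ₗ[ZMod 2] Module.Dual (ZMod 2) V} (hB : B.SeparatingRight) (f : V → ZMod 2) :
    ∑ b, walsh f (B b) ^ 2 = (Fintype.card W * Fintype.card V : ℤ) := by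
  classical
  have orthogonality (y : V) :
      ∑ b, signChar (B b y) = if y = 0 then (Fintype.card W : ℤ) else 0 := by
    split_ifs with hy
    · simp [hy]
    · exact sum_signChar_eq_zero (φ := B.flip y) fun h => hy (hB y (LinearMap.congr_fun h))
  simp_rw [walsh_sq]
  rw [Finset.sum_comm]
  simp_rw [Finset.sum_comm (s := univ (α := W)), ← Finset.mul_sum, orthogonality, mul_ite,
    mul_zero, Finset.sum_ite_eq', Finset.mem_univ, if_true, add_zero, CharTwo.add_self_eq_zero,
    AddChar.map_zero_eq_one, one_mul, Finset.sum_const, Finset.card_univ, nsmul_eq_mul, mul_comm]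

end Walsh

section QuadraticForm

/-- The radical of the polar form of `Q`. In characteristic `2` it can be larger than
`QuadraticMap.radical`, on which `Q` itself has to vanish. -/
def polarRadical {V : Type*} [AddCommGroup V] [Module (ZMod 2) V]
    (Q : QuadraticForm (ZMod 2) V) : Submodule (ZMod 2) V :=
  LinearMap.ker Q.polarBilin

variable {V W ι : Type*} [AddCommGroup V] [Module (ZMod 2) V]

lemma mem_polarRadical {Q : QuadraticForm (ZMod 2) V} {x : V} :
    x ∈ polarRadical Q ↔ Q.polarBilin x = 0 := Iff.rfl

/-- On the radical of its polar form, a quadratic form over `𝔽₂` is linear. -/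
def restrictPolarRadical (Q : QuadraticForm (ZMod 2) V) :
    Module.Dual (ZMod 2) (polarRadical Q) :=
  AddMonoidHom.toZModLinearMap 2
    { toFun := fun x => Q x
      map_zero' := Q.map_zero
      map_add' := fun x y => by
        have polar_eq_zero : QuadraticMap.polar Q x y = 0 := LinearMap.congr_fun x.2 (y : V)
        rw [Submodule.coe_add, QuadraticMap.map_add Q, polar_eq_zero, add_zero] }

variable [Fintype V]

lemma walsh_sq_eq_card_mul_sum (Q : QuadraticForm (ZMod 2) V) (φ : Module.Dual (ZMod 2) V)
    [Fintype (polarRadical Q)] :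
    walsh Q φ ^ 2 = Fintype.card V * ∑ y : polarRadical Q, signChar (Q y + φ y) := by
  classical
  have sum_polar (y : V) : ∑ x, signChar (QuadraticMap.polar Q x y) =
      if y ∈ polarRadical Q then (Fintype.card V : ℤ) else 0 := by
    simp_rw [QuadraticMap.polar_comm Q _ y, ← QuadraticMap.polarBilin_apply_apply]
    split_ifs with hy
    · simp [mem_polarRadical.1 hy]
    · exact sum_signChar_eq_zero hy
  have split (x y : V) : signChar (Q x + Q (x + y)) * signChar (φ y) =
      signChar (Q y + φ y) * signChar (QuadraticMap.polar Q x y) := by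
    simp only [← AddChar.map_add_eq_mul]
    congr 1
    rw [QuadraticMap.map_add Q]
    linear_combination CharTwo.add_self_eq_zero (Q x)
  rw [walsh_sq, Finset.sum_comm]
  simp_rw [split, ← Finset.mul_sum, sum_polar, mul_ite, mul_zero]
  rw [← Finset.sum_filter, Finset.mul_sum, Finset.sum_subtype _ (p := (· ∈ polarRadical Q))
    (fun y => by simp)]
  exact Finset.sum_congr rfl fun y _ => mul_comm _ _

lemma walsh_sq_eq_zero_or (Q : QuadraticForm (ZMod 2) V) (φ : Module.Dual (ZMod 2) V) :
    walsh Q φ ^ 2 = 0 ∨ walsh Q φ ^ 2 = Fintype.card V * Nat.card (polarRadical Q) := by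
  have := Fintype.ofFinite (polarRadical Q)
  rw [walsh_sq_eq_card_mul_sum, Nat.card_eq_fintype_card]
  by_cases h : restrictPolarRadical Q + φ ∘ₗ (polarRadical Q).subtype = 0
  · have vanish (y : polarRadical Q) : Q y + φ y = 0 := LinearMap.congr_fun h y
    simp [vanish]
  · exact .inl (mul_eq_zero_of_right _ (sum_signChar_eq_zero h))

variable [Fintype W] [AddCommGroup W] [Module (ZMod 2) W]
  {B : W →ₗ[ZMod 2] Module.Dual (ZMod 2) V}

lemma ncard_walsh_sq_mul_card_polarRadical (hB : B.SeparatingRight)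
    (Q : QuadraticForm (ZMod 2) V) :
    {b | walsh Q (B b) ^ 2 = Fintype.card V * Nat.card (polarRadical Q)}.ncard *
      Nat.card (polarRadical Q) = Fintype.card W := by
  have parseval := sum_walsh_sq hB Q
  have walsh_sq_eq_ite (b : W) : walsh Q (B b) ^ 2 =
      if walsh Q (B b) ^ 2 = Fintype.card V * Nat.card (polarRadical Q) then
        (Fintype.card V * Nat.card (polarRadical Q) : ℤ) else 0 := by
    split_ifs with h
    · exact h
    · exact (walsh_sq_eq_zero_or Q (B b)).resolve_right h
  rw [Finset.sum_congr rfl fun b _ => walsh_sq_eq_ite b, ← Finset.sum_filter, Finset.sum_const,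
    nsmul_eq_mul] at parseval
  rw [Set.ncard_eq_toFinset_card', Set.toFinset_ofPred]
  have card_ne_zero : (Fintype.card V : ℤ) ≠ 0 := by exact_mod_cast Fintype.card_ne_zero
  exact_mod_cast mul_right_cancel₀ card_ne_zero
    ((mul_assoc _ _ _).trans ((congrArg _ (mul_comm _ _)).trans parseval))

lemma ncard_walsh_sq_eq_mul [Finite ι] (hB : B.SeparatingRight)
    (Q : ι → QuadraticForm (ZMod 2) V) {r : ℕ} (hr : r ≠ 0) :
    {p : ι × W | walsh (Q p.1) (B p.2) ^ 2 = Fintype.card V * r}.ncard * r =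
      Fintype.card W * {i | Nat.card (polarRadical (Q i)) = r}.ncard := by
  classical
  have := Fintype.ofFinite ι
  have fibre (i : ι) : {b | walsh (Q i) (B b) ^ 2 = Fintype.card V * r}.ncard * r =
      if Nat.card (polarRadical (Q i)) = r then Fintype.card W else 0 := by
    split_ifs with h
    · rw [← h, ncard_walsh_sq_mul_card_polarRadical hB]
    · have empty : {b | walsh (Q i) (B b) ^ 2 = Fintype.card V * r} = ∅ := by
        refine Set.eq_empty_of_forall_notMem fun b (hb : _ = _) => ?_
        rcases walsh_sq_eq_zero_or (Q i) (B b) with h' | h' <;> rw [hb] at h' <;> norm_cast at h'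
        · exact mul_ne_zero Fintype.card_ne_zero hr h'
        · exact h (Nat.eq_of_mul_eq_mul_left Fintype.card_pos h').symm
      rw [empty, Set.ncard_empty, zero_mul]
  simp only [Set.ncard_eq_toFinset_card', Set.toFinset_ofPred, Finset.card_filter] at fibre ⊢
  rw [Fintype.sum_prod_type, Finset.sum_mul, Finset.mul_sum]
  exact Finset.sum_congr rfl fun i _ => by rw [fibre, mul_ite, mul_one, mul_zero]

end QuadraticForm

section FiniteField

lemma ncard_pow_pow_eq_self {F : Type*} [Field F] [Finite F] {q m : ℕ} (hF : Nat.card F = q ^ m)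
    (k : ℕ) : {z : F | z ^ q ^ k = z}.ncard = q ^ Nat.gcd m k := by
  have q_pos : 0 < q := Nat.pos_of_ne_zero <| by
    rintro rfl
    rcases Nat.eq_zero_or_pos m with rfl | hm
    · exact (hF ▸ Finite.one_lt_card (α := F)).ne' (pow_zero 0)
    · exact Nat.card_pos.ne' (hF.trans (zero_pow hm.ne'))
  have pow_eq_self_iff (u : Fˣ) : (u : F) ^ q ^ k = u ↔ u ^ (q ^ k - 1) = 1 := by
    rw [← Units.val_pow_eq_pow_val, Units.val_inj, ← mul_eq_right (b := u), ← pow_succ,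
      Nat.sub_add_cancel (Nat.one_le_pow _ _ q_pos)]
  have fixed_eq : {z : F | z ^ q ^ k = z} =
      insert 0 (Units.val '' ((powMonoidHom (q ^ k - 1) : Fˣ →* Fˣ).ker : Set Fˣ)) := by
    ext z
    rcases eq_or_ne z 0 with rfl | hz
    · simp [q_pos.ne']
    · lift z to Fˣ using hz.isUnit
      simp [pow_eq_self_iff, Units.val_inj]
  rw [fixed_eq, Set.ncard_insert_of_notMem (by simp),
    Set.ncard_image_of_injective _ Units.val_injective, ← Nat.card_coe_set_eq]
  change Nat.card (powMonoidHom (q ^ k - 1) : Fˣ →* Fˣ).ker + 1 = _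
  rw [IsCyclic.card_powMonoidHom_ker, Nat.card_units, hF, Nat.pow_sub_one_gcd_pow_sub_one,
    Nat.sub_add_cancel (Nat.one_le_pow _ _ q_pos)]

variable {F : Type*} [Field F] [Finite F] [Algebra (ZMod 2) F]

variable (F) in
/-- The automorphism `x ↦ x ^ 2 ^ e` of a finite field of characteristic `2`. -/
noncomputable def frobeniusPow (e : ℕ) : F ≃ₐ[ZMod 2] F :=
  FiniteField.frobeniusAlgEquivOfAlgebraic (ZMod 2) F ^ e

@[simp]
lemma frobeniusPow_apply (e : ℕ) (x : F) : frobeniusPow F e x = x ^ 2 ^ e := by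
  rw [frobeniusPow, AlgEquiv.coe_pow, FiniteField.coe_frobeniusAlgEquivOfAlgebraic_iterate,
    ZMod.card]

lemma nondegenerate_traceForm : (Algebra.traceForm (ZMod 2) F).Nondegenerate :=
  traceForm_nondegenerate (ZMod 2) F

end FiniteField

section GoldForm

variable {F : Type*} [Field F] [Finite F] [Algebra (ZMod 2) F]

/-- The Gold quadratic form `x ↦ Tr(a x ^ (1 + 2 ^ e))` on a finite field of
characteristic `2`. -/
noncomputable def goldForm (e : ℕ) (a : F) : QuadraticForm (ZMod 2) F :=
  LinearMap.BilinMap.toQuadraticMap <|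
    (Algebra.traceForm (ZMod 2) F).compl₁₂ (LinearMap.mulLeft (ZMod 2) a)
      (frobeniusPow F e).toLinearMap

@[simp]
lemma goldForm_apply (e : ℕ) (a x : F) :
    goldForm e a x = Algebra.trace (ZMod 2) F (a * x ^ (1 + 2 ^ e)) := by
  simp [goldForm, pow_add, mul_assoc]

lemma polarBilin_goldForm (e : ℕ) (a x y : F) : (goldForm e a).polarBilin x y =
    Algebra.trace (ZMod 2) F ((a ^ 2 ^ e * x ^ 2 ^ (2 * e) + a * x) * y ^ 2 ^ e) := by
  have trace_swap : Algebra.trace (ZMod 2) F (a * y * x ^ 2 ^ e) =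
      Algebra.trace (ZMod 2) F (a ^ 2 ^ e * x ^ 2 ^ (2 * e) * y ^ 2 ^ e) := by
    rw [← Algebra.trace_eq_of_algEquiv (frobeniusPow F e), frobeniusPow_apply]
    congr 1
    rw [mul_pow, mul_pow, ← pow_mul, ← pow_add, two_mul, mul_right_comm]
  rw [goldForm, QuadraticMap.polarBilin_apply_apply, LinearMap.BilinMap.polar_toQuadraticMap]
  simp only [LinearMap.compl₁₂_apply, LinearMap.mulLeft_apply, AlgEquiv.toLinearMap_apply,
    frobeniusPow_apply, Algebra.traceForm_apply, trace_swap]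
  rw [add_mul, map_add, add_comm]

lemma mem_polarRadical_goldForm {e : ℕ} {a x : F} :
    x ∈ polarRadical (goldForm e a) ↔ a ^ 2 ^ e * x ^ 2 ^ (2 * e) = a * x := by
  have : CharP F 2 := charP_of_injective_algebraMap (algebraMap (ZMod 2) F).injective 2
  rw [mem_polarRadical, ← CharTwo.add_eq_zero (R := F)]
  refine ⟨fun h => nondegenerate_traceForm.1 _ fun y => ?_, fun h => ?_⟩
  · obtain ⟨z, rfl⟩ := (frobeniusPow F e).surjective y
    rw [frobeniusPow_apply, Algebra.traceForm_apply, ← polarBilin_goldForm, h,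
      LinearMap.zero_apply]
  · ext y
    rw [polarBilin_goldForm, h, zero_mul, map_zero, LinearMap.zero_apply]

variable {m : ℕ}

lemma card_polarRadical_goldForm_zero (e : ℕ) :
    Nat.card (polarRadical (goldForm e (0 : F))) = Nat.card F := by
  have top : polarRadical (goldForm e (0 : F)) = ⊤ :=
    eq_top_iff.2 fun x _ => mem_polarRadical_goldForm.2 (by simp)
  rw [top, Nat.card_congr Submodule.topEquiv.toEquiv]

lemma card_polarRadical_goldForm (hF : Nat.card F = 2 ^ m) (e : ℕ) {a : F} (ha : a ≠ 0) :
    Nat.card (polarRadical (goldForm e a)) = 1 ∨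
      Nat.card (polarRadical (goldForm e a)) = 2 ^ Nat.gcd m (2 * e) := by
  rcases eq_or_ne (polarRadical (goldForm e a)) ⊥ with h | h
  · simp [h]
  right
  obtain ⟨x₀, hx₀, x₀_ne⟩ := Submodule.exists_mem_ne_zero_of_ne_bot h
  rw [mem_polarRadical_goldForm] at hx₀
  have rad_eq : (polarRadical (goldForm e a) : Set F) =
      (· * x₀) '' {z | z ^ 2 ^ (2 * e) = z} := by
    ext x
    obtain ⟨z, rfl⟩ : ∃ z, z * x₀ = x := ⟨x / x₀, div_mul_cancel₀ x x₀_ne⟩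
    rw [SetLike.mem_coe, mem_polarRadical_goldForm,
      (mul_left_injective₀ x₀_ne).mem_set_image (a := z), Set.mem_ofPred_eq, mul_pow,
      mul_left_comm, hx₀, mul_left_comm a, mul_left_inj' (mul_ne_zero ha x₀_ne)]
  rw [← ncard_pow_pow_eq_self hF, ← Set.ncard_image_of_injective _ (mul_left_injective₀ x₀_ne),
    ← rad_eq, ← Nat.card_coe_set_eq]
  rfl

lemma ncard_mem_polarRadical_goldForm (hF : Nat.card F = 2 ^ m) (e : ℕ) {x : F} (hx : x ≠ 0) :
    {a | x ∈ polarRadical (goldForm e a)}.ncard = 2 ^ Nat.gcd m e := by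
  have hxe : x ^ 2 ^ e ≠ 0 := pow_ne_zero _ hx
  have mul_inj := mul_left_injective₀ (mul_ne_zero hx hxe)
  rw [← ncard_pow_pow_eq_self hF, ← Set.ncard_image_of_injective _ mul_inj]
  congr 1
  ext c
  obtain ⟨a, rfl⟩ : ∃ a, a * (x * x ^ 2 ^ e) = c :=
    ⟨c / _, div_mul_cancel₀ c (mul_ne_zero hx hxe)⟩
  rw [mul_inj.mem_set_image (a := a), Set.mem_ofPred_eq, Set.mem_ofPred_eq,
    mem_polarRadical_goldForm, ← mul_left_inj' hxe, mul_pow, mul_pow, ← pow_mul, ← pow_add 2,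
    ← two_mul, mul_assoc a, mul_assoc (a ^ 2 ^ e), mul_comm (x ^ 2 ^ e)]

lemma sum_card_polarRadical_goldForm [Fintype F] (hF : Nat.card F = 2 ^ m) (e : ℕ) :
    ∑ a : F, Nat.card (polarRadical (goldForm e a)) =
      2 ^ m + (2 ^ m - 1) * 2 ^ Nat.gcd m e := by
  classical
  have double_count := Finset.sum_card_bipartiteAbove_eq_sum_card_bipartiteBelow
    (s := (univ : Finset F)) (t := (univ : Finset F)) fun a x => x ∈ polarRadical (goldForm e a)
  have above (a : F) : #(univ.bipartiteAbove (fun a x => x ∈ polarRadical (goldForm e a)) a) =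
      Nat.card (polarRadical (goldForm e a)) := by
    rw [Nat.card_eq_fintype_card, Fintype.card_subtype, Finset.bipartiteAbove]
  have below (x : F) : #(univ.bipartiteBelow (fun a x => x ∈ polarRadical (goldForm e a)) x) =
      {a | x ∈ polarRadical (goldForm e a)}.ncard := by
    rw [Set.ncard_eq_toFinset_card', Set.toFinset_ofPred, Finset.bipartiteBelow]
  simp_rw [above, below] at double_count
  rw [double_count, ← Finset.add_sum_erase _ _ (mem_univ 0), Finset.sum_congr rfl fun x hx =>
    ncard_mem_polarRadical_goldForm hF e (Finset.ne_of_mem_erase hx), Finset.sum_const,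
    Finset.card_erase_of_mem (mem_univ _), Finset.card_univ, ← Nat.card_eq_fintype_card, hF,
    smul_eq_mul]
  simp [← hF]

end GoldForm

section RadicalDistribution

variable {F : Type*} [Field F] [Finite F] [Algebra (ZMod 2) F] {m e : ℕ}

lemma card_polarRadical_goldForm_eq_card_iff (hF : Nat.card F = 2 ^ m)
    (hgcd : Nat.gcd m (2 * e) < m) {a : F} :
    Nat.card (polarRadical (goldForm e a)) = 2 ^ m ↔ a = 0 := by
  refine ⟨fun h => by_contra fun ha => ?_, ?_⟩
  · rcases card_polarRadical_goldForm hF e ha with h' | h' <;> rw [h] at h'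
    · exact (Nat.one_lt_two_pow (by omega)).ne' h'
    · exact hgcd.ne' (Nat.pow_right_injective le_rfl h')
  · rintro rfl
    rw [card_polarRadical_goldForm_zero, hF]

lemma sum_apply_card_polarRadical_goldForm [Fintype F] (hF : Nat.card F = 2 ^ m)
    (hgcd : Nat.gcd m (2 * e) < m) (g : ℕ → ℕ) :
    ∑ a : F, g (Nat.card (polarRadical (goldForm e a))) = g (2 ^ m) +
      {a : F | Nat.card (polarRadical (goldForm e a)) = 2 ^ Nat.gcd m (2 * e)}.ncard *
        g (2 ^ Nat.gcd m (2 * e)) +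
      {a : F | Nat.card (polarRadical (goldForm e a)) = 1}.ncard * g 1 := by
  classical
  have one_lt : 1 < 2 ^ Nat.gcd m (2 * e) :=
    Nat.one_lt_two_pow (Nat.gcd_pos_of_pos_left _ (by omega)).ne'
  have lt_full : 2 ^ Nat.gcd m (2 * e) < 2 ^ m := Nat.pow_lt_pow_right one_lt_two hgcd
  have split (a : F) : g (Nat.card (polarRadical (goldForm e a))) =
      (if a = 0 then g (2 ^ m) else 0) +
      (if Nat.card (polarRadical (goldForm e a)) = 2 ^ Nat.gcd m (2 * e)
        then 1 else 0) * g (2 ^ Nat.gcd m (2 * e)) +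
      (if Nat.card (polarRadical (goldForm e a)) = 1 then 1 else 0) * g 1 := by
    rcases eq_or_ne a 0 with rfl | ha
    · rw [card_polarRadical_goldForm_zero, hF, if_pos rfl, if_neg lt_full.ne',
        if_neg (one_lt.trans lt_full).ne', zero_mul, zero_mul, add_zero, add_zero]
    · rcases card_polarRadical_goldForm hF e ha with h | h
      · rw [h, if_neg ha, if_neg one_lt.ne, if_pos rfl, zero_mul, zero_add, zero_add, one_mul]
      · rw [h, if_neg ha, if_pos rfl, if_neg one_lt.ne', zero_mul, zero_add, one_mul, add_zero]
  simp only [Set.ncard_eq_toFinset_card', Set.toFinset_ofPred, Finset.card_filter]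
  rw [Finset.sum_congr rfl fun a _ => split a, Finset.sum_add_distrib, Finset.sum_add_distrib,
    Finset.sum_mul, Finset.sum_mul, Finset.sum_ite_eq', if_pos (mem_univ 0)]

lemma ncard_polarRadical_goldForm_add (hF : Nat.card F = 2 ^ m)
    (hgcd : Nat.gcd m (2 * e) < m) :
    {a : F | Nat.card (polarRadical (goldForm e a)) = 2 ^ Nat.gcd m (2 * e)}.ncard +
      {a : F | Nat.card (polarRadical (goldForm e a)) = 1}.ncard = 2 ^ m - 1 := by
  have := Fintype.ofFinite F
  have total := sum_apply_card_polarRadical_goldForm hF hgcd fun _ => 1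
  simp only [Finset.sum_const, Finset.card_univ, ← Nat.card_eq_fintype_card, hF, smul_eq_mul,
    mul_one] at total
  omega

lemma ncard_polarRadical_goldForm_mul (hF : Nat.card F = 2 ^ m)
    (hgcd : Nat.gcd m (2 * e) < m) :
    {a : F | Nat.card (polarRadical (goldForm e a)) = 2 ^ Nat.gcd m (2 * e)}.ncard *
      2 ^ Nat.gcd m (2 * e) + {a : F | Nat.card (polarRadical (goldForm e a)) = 1}.ncard =
      (2 ^ m - 1) * 2 ^ Nat.gcd m e := by
  have := Fintype.ofFinite F
  have total := sum_apply_card_polarRadical_goldForm hF hgcd id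
  simp only [id, sum_card_polarRadical_goldForm hF, mul_one] at total
  omega

lemma ncard_card_polarRadical_goldForm_eq_two_pow (hF : Nat.card F = 2 ^ m)
    (hgcd : Nat.gcd m (2 * e) = 2 * Nat.gcd m e) (hlt : 2 * Nat.gcd m e < m) :
    (2 ^ Nat.gcd m e + 1) *
      {a : F | Nat.card (polarRadical (goldForm e a)) = 2 ^ (2 * Nat.gcd m e)}.ncard =
      2 ^ m - 1 := by
  have count := ncard_polarRadical_goldForm_add hF (hgcd.trans_lt hlt)
  have weighted := ncard_polarRadical_goldForm_mul hF (hgcd.trans_lt hlt)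
  rw [hgcd, mul_comm 2, pow_mul] at count weighted
  have one_lt : 1 < 2 ^ Nat.gcd m e :=
    Nat.one_lt_two_pow (Nat.gcd_pos_of_pos_left _ (by omega)).ne'
  rw [← count] at weighted ⊢
  rw [mul_comm 2, pow_mul]
  obtain ⟨q, hq⟩ : ∃ q, 2 ^ Nat.gcd m e = q + 1 := ⟨_, (Nat.sub_add_cancel one_lt.le).symm⟩
  rw [hq] at weighted one_lt ⊢
  have q_ne_zero : q ≠ 0 := by omega
  exact mul_right_cancel₀ q_ne_zero (by linear_combination weighted)

lemma ncard_card_polarRadical_goldForm_eq_one (hF : Nat.card F = 2 ^ m)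
    (hgcd : Nat.gcd m (2 * e) = 2 * Nat.gcd m e) (hlt : 2 * Nat.gcd m e < m) :
    (2 ^ Nat.gcd m e + 1) * {a : F | Nat.card (polarRadical (goldForm e a)) = 1}.ncard =
      2 ^ Nat.gcd m e * (2 ^ m - 1) := by
  have count := ncard_polarRadical_goldForm_add hF (hgcd.trans_lt hlt)
  have degenerate := ncard_card_polarRadical_goldForm_eq_two_pow hF hgcd hlt
  rw [hgcd] at count
  rw [← count] at degenerate ⊢
  linear_combination degenerate.symm

end RadicalDistribution

section GoldSpectrum

variable {F : Type*} [Field F] [Fintype F] [Algebra (ZMod 2) F]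

/-- The Walsh coefficient `∑ x, (-1) ^ Tr(a x ^ (1 + 2 ^ e) + b x)` for `p = (a, b)`. -/
noncomputable def goldWalsh (e : ℕ) (p : F × F) : ℤ :=
  walsh (goldForm e p.1) (Algebra.traceForm (ZMod 2) F p.2)

variable {m e : ℕ}

lemma ncard_goldWalsh_sq_eq_mul (hF : Fintype.card F = 2 ^ m) (k : ℕ) :
    {p : F × F | goldWalsh e p ^ 2 = 2 ^ (m + k)}.ncard * 2 ^ k =
      2 ^ m * {a : F | Nat.card (polarRadical (goldForm e a)) = 2 ^ k}.ncard := by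
  have := ncard_walsh_sq_eq_mul (nondegenerate_traceForm (F := F)).2 (goldForm e)
    (pow_ne_zero k two_ne_zero)
  simpa [goldWalsh, hF, pow_add] using this

lemma goldWalsh_sq_mem (hF : Fintype.card F = 2 ^ m) (e : ℕ) (p : F × F) :
    goldWalsh e p ^ 2 = 0 ∨ goldWalsh e p ^ 2 = 2 ^ m ∨
      goldWalsh e p ^ 2 = 2 ^ (m + Nat.gcd m (2 * e)) ∨ goldWalsh e p ^ 2 = 2 ^ (2 * m) := by
  have hF' : Nat.card F = 2 ^ m := Nat.card_eq_fintype_card.trans hF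
  refine (walsh_sq_eq_zero_or _ _).imp_right fun h => ?_
  rw [← goldWalsh, hF] at h
  rw [h]
  rcases eq_or_ne p.1 0 with h0 | ha
  · refine .inr (.inr ?_)
    rw [h0, card_polarRadical_goldForm_zero, hF']
    push_cast
    ring
  · rcases card_polarRadical_goldForm hF' e ha with h1 | h1 <;> simp [h1, pow_add]

lemma ncard_goldWalsh_sq_eq_two_pow_add (hF : Fintype.card F = 2 ^ m)
    (hgcd : Nat.gcd m (2 * e) = 2 * Nat.gcd m e) (hlt : 2 * Nat.gcd m e < m) :
    (2 ^ Nat.gcd m e + 1) * {p : F × F | goldWalsh e p ^ 2 = 2 ^ (m + 2 * Nat.gcd m e)}.ncard =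
      2 ^ (m - 2 * Nat.gcd m e) * (2 ^ m - 1) := by
  have pairs := ncard_goldWalsh_sq_eq_mul (e := e) hF (2 * Nat.gcd m e)
  have forms := ncard_card_polarRadical_goldForm_eq_two_pow
    (Nat.card_eq_fintype_card.trans hF) hgcd hlt
  have split : 2 ^ m = 2 ^ (m - 2 * Nat.gcd m e) * 2 ^ (2 * Nat.gcd m e) := by
    rw [← pow_add, Nat.sub_add_cancel hlt.le]
  refine Nat.eq_of_mul_eq_mul_right (Nat.two_pow_pos (2 * Nat.gcd m e)) ?_
  rw [mul_assoc, pairs, mul_left_comm, forms, mul_right_comm, ← split]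

lemma ncard_goldWalsh_sq_eq_two_pow (hF : Fintype.card F = 2 ^ m)
    (hgcd : Nat.gcd m (2 * e) = 2 * Nat.gcd m e) (hlt : 2 * Nat.gcd m e < m) :
    (2 ^ Nat.gcd m e + 1) * {p : F × F | goldWalsh e p ^ 2 = 2 ^ m}.ncard =
      2 ^ (m + Nat.gcd m e) * (2 ^ m - 1) := by
  have pairs := ncard_goldWalsh_sq_eq_mul (e := e) hF 0
  have forms := ncard_card_polarRadical_goldForm_eq_one
    (Nat.card_eq_fintype_card.trans hF) hgcd hlt
  rw [pow_zero, mul_one, add_zero] at pairs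
  rw [pairs, mul_left_comm, forms, pow_add, mul_assoc]

lemma ncard_goldWalsh_sq_eq_two_pow_two_mul (hF : Fintype.card F = 2 ^ m)
    (hgcd : Nat.gcd m (2 * e) < m) :
    {p : F × F | goldWalsh e p ^ 2 = 2 ^ (2 * m)}.ncard = 1 := by
  have pairs := ncard_goldWalsh_sq_eq_mul (e := e) hF m
  simp only [card_polarRadical_goldForm_eq_card_iff (Nat.card_eq_fintype_card.trans hF) hgcd,
    Set.ofPred_eq_eq_singleton, Set.ncard_singleton, ← two_mul, mul_one] at pairs
  exact Nat.eq_of_mul_eq_mul_right (Nat.two_pow_pos m) (pairs.trans (one_mul _).symm)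

lemma ncard_goldWalsh_sq_add (hF : Fintype.card F = 2 ^ m) (hgcd : Nat.gcd m (2 * e) < m) :
    {p : F × F | goldWalsh e p = 0}.ncard + {p : F × F | goldWalsh e p ^ 2 = 2 ^ m}.ncard +
      {p : F × F | goldWalsh e p ^ 2 = 2 ^ (m + Nat.gcd m (2 * e))}.ncard + 1 = 2 ^ (2 * m) := by
  classical
  have gcd_pos : 0 < Nat.gcd m (2 * e) := Nat.gcd_pos_of_pos_left _ (by omega)
  have pow_inj {i j : ℕ} : (2 : ℤ) ^ i = 2 ^ j ↔ i = j :=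
    (pow_right_injective₀ two_pos (by norm_num)).eq_iff
  have zero_ne {i : ℕ} : (0 : ℤ) ≠ 2 ^ i := (pow_ne_zero i two_ne_zero).symm
  have fibres := Finset.card_eq_sum_card_fiberwise (s := (univ : Finset (F × F)))
    (f := fun p => goldWalsh e p ^ 2) (t := {0, 2 ^ m, 2 ^ (m + Nat.gcd m (2 * e)), 2 ^ (2 * m)})
    fun p _ => by simpa using goldWalsh_sq_mem hF e p
  rw [Finset.sum_insert (by simp [zero_ne]), Finset.sum_insert (by simp [pow_inj]; omega),
    Finset.sum_insert (by simp [pow_inj]; omega), Finset.sum_singleton, Finset.card_univ,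
    Fintype.card_prod, hF, ← pow_add, ← two_mul] at fibres
  rw [fibres, ← ncard_goldWalsh_sq_eq_two_pow_two_mul hF hgcd]
  simp only [Set.ncard_eq_toFinset_card', Set.toFinset_ofPred, pow_eq_zero_iff two_ne_zero,
    add_assoc]

lemma ncard_goldWalsh_eq_zero (hF : Fintype.card F = 2 ^ m)
    (hgcd : Nat.gcd m (2 * e) = 2 * Nat.gcd m e) (hlt : 2 * Nat.gcd m e < m) :
    {p : F × F | goldWalsh e p = 0}.ncard =
      ((2 ^ Nat.gcd m e - 1) * 2 ^ (m - 2 * Nat.gcd m e) + 1) * (2 ^ m - 1) := by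
  have total := ncard_goldWalsh_sq_add hF (hgcd.trans_lt hlt)
  have large := ncard_goldWalsh_sq_eq_two_pow_add hF hgcd hlt
  have small := ncard_goldWalsh_sq_eq_two_pow hF hgcd hlt
  have split : 2 ^ m = 2 ^ (m - 2 * Nat.gcd m e) * (2 ^ Nat.gcd m e) ^ 2 := by
    rw [← pow_mul, ← pow_add, mul_comm _ 2, Nat.sub_add_cancel hlt.le]
  rw [hgcd, mul_comm 2 m, pow_mul] at total
  refine Nat.eq_of_mul_eq_mul_left (Nat.succ_pos (2 ^ Nat.gcd m e)) ?_
  rw [pow_add] at small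
  zify [Nat.one_le_two_pow] at total large small split ⊢
  linear_combination (2 ^ Nat.gcd m e + 1 : ℤ) * total - large - small +
    (2 ^ m - 1 : ℤ) * split

end GoldSpectrum

section Arithmetic

lemma gcd_two_mul_of_even_div {m e : ℕ} (h : Even (m / Nat.gcd m e)) :
    Nat.gcd m (2 * e) = 2 * Nat.gcd m e := by
  refine Nat.dvd_antisymm ?_ (Nat.dvd_gcd ?_ (Nat.mul_dvd_mul_left 2 (Nat.gcd_dvd_right m e)))
  · rw [← Nat.gcd_mul_left]
    exact Nat.gcd_dvd_gcd_of_dvd_left _ (Nat.dvd_mul_left m 2)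
  · rw [mul_comm]
    exact (Nat.dvd_div_iff_mul_dvd (Nat.gcd_dvd_left m e)).1 h.two_dvd

lemma four_le_of_even_div {m e : ℕ} (h : Even (m / Nat.gcd m e)) (hlt : 2 * Nat.gcd m e < m) :
    4 ≤ m := by
  obtain ⟨k, hk⟩ := h
  have m_eq : Nat.gcd m e * (k + k) = m := hk ▸ Nat.mul_div_cancel' (Nat.gcd_dvd_left m e)
  have gcd_pos : 0 < Nat.gcd m e := Nat.gcd_pos_of_pos_left e (by omega)
  have two_le : 2 ≤ k := by nlinarith
  nlinarith

lemma two_pow_sub_two_mul_eq_zero_iff {m w : ℕ} (hm : m ≠ 0) :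
    (2 : ℤ) ^ m - 2 * w = 0 ↔ w = 2 ^ (m - 1) := by
  obtain ⟨n, rfl⟩ := Nat.exists_eq_succ_of_ne_zero hm
  zify
  rw [Nat.succ_sub_one, pow_succ]
  omega

lemma two_pow_sub_two_mul_sq_eq_iff {m w k : ℕ} (hk : Even k) (hk0 : k ≠ 0) (hkm : k ≤ 2 * m) :
    ((2 : ℤ) ^ m - 2 * w) ^ 2 = 2 ^ k ↔
      w = 2 ^ (m - 1) - 2 ^ ((k - 2) / 2) ∨ w = 2 ^ (m - 1) + 2 ^ ((k - 2) / 2) := by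
  obtain ⟨j, rfl⟩ : ∃ j, k = 2 * (j + 1) := by
    obtain ⟨i, rfl⟩ := hk
    exact ⟨i - 1, by omega⟩
  obtain ⟨n, rfl⟩ : ∃ n, m = n + 1 := ⟨m - 1, by omega⟩
  have pow_le : 2 ^ j ≤ 2 ^ n := Nat.pow_le_pow_right two_pos (by omega)
  have half : (2 * (j + 1) - 2) / 2 = j := by omega
  rw [half, Nat.add_sub_cancel, mul_comm 2 (j + 1), pow_mul, sq_eq_sq_iff_eq_or_eq_neg]
  zify [pow_le]
  rw [pow_succ, pow_succ]
  refine or_congr ?_ ?_ <;> omega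

end Arithmetic

section GoldCode

variable {F ι : Type*} [Field F] [Finite F] [Algebra (ZMod 2) F]

/-- The evaluation at the points `P i` of the function
`x ↦ Tr(a x ^ (1 + 2 ^ e)) + Tr(b x) + c`, for `t = ((a, b), c)`. -/
noncomputable def goldCodeword (e : ℕ) (P : ι → F) :
    (F × F) × ZMod 2 →ₗ[ZMod 2] ι → ZMod 2 where
  toFun t i := goldForm e t.1.1 (P i) + Algebra.traceForm (ZMod 2) F t.1.2 (P i) + t.2
  map_add' s t := by
    ext i
    simp only [goldForm_apply, Prod.fst_add, Prod.snd_add, add_mul, map_add, Pi.add_apply,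
      LinearMap.add_apply]
    ring
  map_smul' r t := by
    ext i
    simp only [goldForm_apply, Prod.smul_fst, Prod.smul_snd, smul_mul_assoc, map_smul,
      Pi.smul_apply, LinearMap.smul_apply, smul_add, RingHom.id_apply]

/-- The code of length `ι` spanned by all `x ↦ Tr(a x ^ (1 + 2 ^ e)) + Tr(b x) + c`. -/
noncomputable def goldCode (e : ℕ) (P : ι → F) : Submodule (ZMod 2) (ι → ZMod 2) :=
  LinearMap.range (goldCodeword e P)

variable {m e w : ℕ}

lemma signChar_mul_goldWalsh [Fintype F] [Fintype ι] (e : ℕ) (P : ι ≃ F) (t : (F × F) × ZMod 2) :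
    signChar t.2 * goldWalsh e t.1 = Fintype.card F - 2 * hammingNorm (goldCodeword e P t) := by
  rw [← Fintype.card_congr P, ← sum_signChar_eq_card_sub, goldWalsh, walsh, Finset.mul_sum,
    ← Equiv.sum_comp P]
  refine Finset.sum_congr rfl fun i _ => ?_
  rw [← AddChar.map_add_eq_mul, add_comm]
  rfl

lemma goldWalsh_sq_eq_sq [Fintype F] [Fintype ι] (e : ℕ) (P : ι ≃ F) (t : (F × F) × ZMod 2) :
    goldWalsh e t.1 ^ 2 = (Fintype.card F - 2 * hammingNorm (goldCodeword e P t)) ^ 2 := by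
  rw [← signChar_mul_goldWalsh, mul_pow, sq (signChar _), signChar_mul_self, one_mul]

lemma goldCodeword_injective (hF : Nat.card F = 2 ^ m) (hgcd : Nat.gcd m (2 * e) < m)
    (P : ι ≃ F) : Function.Injective (goldCodeword e P) := by
  have := Fintype.ofFinite F
  have := Fintype.ofEquiv F P.symm
  have hF' : Fintype.card F = 2 ^ m := Nat.card_eq_fintype_card.symm.trans hF
  obtain ⟨p₀, hp₀⟩ := Set.ncard_eq_one.1 (ncard_goldWalsh_sq_eq_two_pow_two_mul hF' hgcd)
  have eq_of_codeword_zero (t) (ht : goldCodeword e P t = 0) : t.1 = p₀ := by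
    have : t.1 ∈ {p : F × F | goldWalsh e p ^ 2 = 2 ^ (2 * m)} := by
      rw [Set.mem_ofPred_eq, goldWalsh_sq_eq_sq e P, ht, hammingNorm_zero, hF']
      push_cast
      ring
    simpa [hp₀] using this
  refine (injective_iff_map_eq_zero _).2 fun t ht => ?_
  have fst_eq_zero : t.1 = 0 :=
    (eq_of_codeword_zero t ht).trans (eq_of_codeword_zero 0 (map_zero _)).symm
  have value := congrFun ht (P.symm 0)
  refine Prod.ext fst_eq_zero ?_
  simpa [goldCodeword, fst_eq_zero] using value

lemma finrank_goldCode (hF : Nat.card F = 2 ^ m) (hgcd : Nat.gcd m (2 * e) < m) (P : ι ≃ F) :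
    Module.finrank (ZMod 2) (goldCode e P) = 2 * m + 1 := by
  have finrank_eq : Module.finrank (ZMod 2) F = m := by
    have card_eq := Module.natCard_eq_pow_finrank (K := ZMod 2) (V := F)
    rw [hF, Nat.card_zmod] at card_eq
    exact (Nat.pow_right_injective le_rfl card_eq).symm
  rw [goldCode, LinearMap.finrank_range_of_inj (goldCodeword_injective hF hgcd P),
    Module.finrank_prod, Module.finrank_prod, Module.finrank_self, finrank_eq, two_mul]

lemma ncard_goldCode_hammingNorm_eq [Fintype F] [Fintype ι] (hF : Fintype.card F = 2 ^ m)
    (hgcd : Nat.gcd m (2 * e) < m) (P : ι ≃ F) (w : ℕ) :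
    {y | y ∈ goldCode e P ∧ hammingNorm y = w}.ncard =
      {t : (F × F) × ZMod 2 | signChar t.2 * goldWalsh e t.1 = 2 ^ m - 2 * w}.ncard := by
  have hF' : Nat.card F = 2 ^ m := Nat.card_eq_fintype_card.trans hF
  rw [← Set.ncard_image_of_injective _ (goldCodeword_injective hF' hgcd P)]
  congr 1
  ext y
  simp only [signChar_mul_goldWalsh e P, hF, goldCode, Set.mem_image, Set.mem_ofPred_eq,
    LinearMap.mem_range]
  push_cast
  constructor
  · rintro ⟨⟨t, rfl⟩, rfl⟩
    exact ⟨t, rfl, rfl⟩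
  · rintro ⟨t, ht, rfl⟩
    exact ⟨⟨t, rfl⟩, by omega⟩

lemma ncard_goldCode_of_ne_zero [Fintype F] [Fintype ι] (hF : Fintype.card F = 2 ^ m)
    (hgcd : Nat.gcd m (2 * e) < m) (P : ι ≃ F) {N : ℤ} (hN : N ≠ 0)
    (hw : ((2 : ℤ) ^ m - 2 * w) ^ 2 = N) :
    {y | y ∈ goldCode e P ∧ hammingNorm y = w}.ncard =
      {p : F × F | goldWalsh e p ^ 2 = N}.ncard := by
  subst hw
  rw [ncard_goldCode_hammingNorm_eq hF hgcd]
  generalize (2 : ℤ) ^ m - 2 * w = s at hN ⊢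
  have injOn : Set.InjOn Prod.fst
      {t : (F × F) × ZMod 2 | signChar t.2 * goldWalsh e t.1 = s} := by
    rintro ⟨p, c⟩ (hc : _ = s) ⟨_, c'⟩ (hc' : _ = s) rfl
    have walsh_ne_zero : goldWalsh e p ≠ 0 := by
      rintro h
      exact hN (by rw [← hc, h, mul_zero, zero_pow two_ne_zero])
    exact Prod.ext rfl (signChar_injective (mul_right_cancel₀ walsh_ne_zero (hc.trans hc'.symm)))
  rw [← injOn.ncard_image]
  congr 1
  ext p
  simp only [Set.mem_image, Set.mem_ofPred_eq]
  constructor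
  · rintro ⟨t, rfl, rfl⟩
    rw [mul_pow, sq (signChar _), signChar_mul_self, one_mul]
  · intro h
    rcases sq_eq_sq_iff_eq_or_eq_neg.1 h with h | h
    · exact ⟨(p, 0), by rw [h, AddChar.map_zero_eq_one, one_mul], rfl⟩
    · refine ⟨(p, 1), ?_, rfl⟩
      have signChar_one : signChar 1 = -1 := rfl
      rw [h, signChar_one, neg_mul_neg, one_mul]

lemma ncard_goldCode_of_eq_zero [Fintype F] [Fintype ι] (hF : Fintype.card F = 2 ^ m)
    (hgcd : Nat.gcd m (2 * e) < m) (P : ι ≃ F) (hw : (2 : ℤ) ^ m - 2 * w = 0) :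
    {y | y ∈ goldCode e P ∧ hammingNorm y = w}.ncard =
      2 * {p : F × F | goldWalsh e p = 0}.ncard := by
  have signChar_ne_zero (c : ZMod 2) : signChar c ≠ 0 :=
    left_ne_zero_of_mul_eq_one (signChar_mul_self c)
  have eq_prod : {t : (F × F) × ZMod 2 | signChar t.2 * goldWalsh e t.1 = 0} =
      {p : F × F | goldWalsh e p = 0} ×ˢ Set.univ := by
    ext t
    simp [signChar_ne_zero]
  rw [ncard_goldCode_hammingNorm_eq hF hgcd, hw, eq_prod, Set.ncard_prod, Set.ncard_univ,
    Nat.card_zmod, mul_comm]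

end GoldCode

section WeightDistribution

variable {F ι : Type*} [Field F] [Finite F] [Algebra (ZMod 2) F] [Fintype ι] {m e w : ℕ}

lemma even_of_gcd_two_mul (hgcd : Nat.gcd m (2 * e) = 2 * Nat.gcd m e) : Even m :=
  even_iff_two_dvd.2 <|
    (Dvd.intro _ rfl).trans (hgcd ▸ Nat.gcd_dvd_left m (2 * e))

lemma ncard_goldCode_weight_extremal (hF : Nat.card F = 2 ^ m)
    (hgcd : Nat.gcd m (2 * e) = 2 * Nat.gcd m e) (hlt : 2 * Nat.gcd m e < m) (P : ι ≃ F)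
    (hw : w = 2 ^ (m - 1) - 2 ^ ((m + 2 * Nat.gcd m e - 2) / 2) ∨
      w = 2 ^ (m - 1) + 2 ^ ((m + 2 * Nat.gcd m e - 2) / 2)) :
    (2 ^ Nat.gcd m e + 1) * {y | y ∈ goldCode e P ∧ hammingNorm y = w}.ncard =
      2 ^ (m - 2 * Nat.gcd m e) * (2 ^ m - 1) := by
  have := Fintype.ofFinite F
  have hF' : Fintype.card F = 2 ^ m := Nat.card_eq_fintype_card.symm.trans hF
  rw [← two_pow_sub_two_mul_sq_eq_iff ((even_of_gcd_two_mul hgcd).add (even_two_mul _))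
    (by omega) (by omega)] at hw
  rw [ncard_goldCode_of_ne_zero hF' (hgcd.trans_lt hlt) P (by positivity) hw,
    ncard_goldWalsh_sq_eq_two_pow_add hF' hgcd hlt]

lemma ncard_goldCode_weight_intermediate (hF : Nat.card F = 2 ^ m)
    (hgcd : Nat.gcd m (2 * e) = 2 * Nat.gcd m e) (hlt : 2 * Nat.gcd m e < m) (P : ι ≃ F)
    (hw : w = 2 ^ (m - 1) - 2 ^ ((m - 2) / 2) ∨ w = 2 ^ (m - 1) + 2 ^ ((m - 2) / 2)) :
    (2 ^ Nat.gcd m e + 1) * {y | y ∈ goldCode e P ∧ hammingNorm y = w}.ncard =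
      2 ^ (m + Nat.gcd m e) * (2 ^ m - 1) := by
  have := Fintype.ofFinite F
  have hF' : Fintype.card F = 2 ^ m := Nat.card_eq_fintype_card.symm.trans hF
  rw [← two_pow_sub_two_mul_sq_eq_iff (even_of_gcd_two_mul hgcd) (by omega) (by omega)] at hw
  rw [ncard_goldCode_of_ne_zero hF' (hgcd.trans_lt hlt) P (by positivity) hw,
    ncard_goldWalsh_sq_eq_two_pow hF' hgcd hlt]

lemma ncard_goldCode_weight_half (hF : Nat.card F = 2 ^ m)
    (hgcd : Nat.gcd m (2 * e) = 2 * Nat.gcd m e) (hlt : 2 * Nat.gcd m e < m) (P : ι ≃ F) :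
    {y | y ∈ goldCode e P ∧ hammingNorm y = 2 ^ (m - 1)}.ncard =
      2 * ((2 ^ Nat.gcd m e - 1) * 2 ^ (m - 2 * Nat.gcd m e) + 1) * (2 ^ m - 1) := by
  have := Fintype.ofFinite F
  have hF' : Fintype.card F = 2 ^ m := Nat.card_eq_fintype_card.symm.trans hF
  rw [ncard_goldCode_of_eq_zero hF' (hgcd.trans_lt hlt) P
    ((two_pow_sub_two_mul_eq_zero_iff (by omega)).2 rfl),
    ncard_goldWalsh_eq_zero hF' hgcd hlt, mul_assoc]

lemma ncard_goldCode_weight_trivial (hF : Nat.card F = 2 ^ m) (hgcd : Nat.gcd m (2 * e) < m)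
    (P : ι ≃ F) (hw : w = 0 ∨ w = 2 ^ m) :
    {y | y ∈ goldCode e P ∧ hammingNorm y = w}.ncard = 1 := by
  have := Fintype.ofFinite F
  have hF' : Fintype.card F = 2 ^ m := Nat.card_eq_fintype_card.symm.trans hF
  have hw' : ((2 : ℤ) ^ m - 2 * w) ^ 2 = 2 ^ (2 * m) := by
    rcases hw with rfl | rfl <;> push_cast <;> ring
  rw [ncard_goldCode_of_ne_zero hF' hgcd P (by positivity) hw',
    ncard_goldWalsh_sq_eq_two_pow_two_mul hF' hgcd]

lemma hammingNorm_mem_of_mem_goldCode (hF : Nat.card F = 2 ^ m)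
    (hgcd : Nat.gcd m (2 * e) = 2 * Nat.gcd m e) (hlt : 2 * Nat.gcd m e < m) (P : ι ≃ F)
    {y : ι → ZMod 2} (hy : y ∈ goldCode e P) : hammingNorm y ∈
      ({0, 2 ^ (m - 1) - 2 ^ ((m + 2 * Nat.gcd m e - 2) / 2), 2 ^ (m - 1) - 2 ^ ((m - 2) / 2),
        2 ^ (m - 1), 2 ^ (m - 1) + 2 ^ ((m - 2) / 2),
        2 ^ (m - 1) + 2 ^ ((m + 2 * Nat.gcd m e - 2) / 2), 2 ^ m} : Set ℕ) := by
  have := Fintype.ofFinite F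
  have hF' : Fintype.card F = 2 ^ m := Nat.card_eq_fintype_card.symm.trans hF
  obtain ⟨t, rfl⟩ := hy
  have spectrum := goldWalsh_sq_mem hF' e t.1
  have even_m := even_of_gcd_two_mul hgcd
  have full_iff (w : ℕ) : ((2 : ℤ) ^ m - 2 * w) ^ 2 = 2 ^ (2 * m) ↔ w = 0 ∨ w = 2 ^ m := by
    rw [mul_comm 2 m, pow_mul, sq_eq_sq_iff_eq_or_eq_neg]
    zify
    exact or_congr (by omega) (by omega)
  rw [goldWalsh_sq_eq_sq e P, hF', hgcd] at spectrum
  push_cast at spectrum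
  rw [pow_eq_zero_iff two_ne_zero, two_pow_sub_two_mul_eq_zero_iff (by omega),
    two_pow_sub_two_mul_sq_eq_iff even_m (by omega) (by omega),
    two_pow_sub_two_mul_sq_eq_iff (even_m.add (even_two_mul _)) (by omega) (by omega),
    full_iff] at spectrum
  simp only [Set.mem_insert_iff, Set.mem_singleton_iff]
  tauto

lemma isLeast_weight_goldCode (hF : Nat.card F = 2 ^ m)
    (hgcd : Nat.gcd m (2 * e) = 2 * Nat.gcd m e) (hlt : 2 * Nat.gcd m e < m) (P : ι ≃ F) :
    IsLeast {i | ∃ y ∈ goldCode e P, y ≠ 0 ∧ hammingNorm y = i}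
      (2 ^ (m - 1) - 2 ^ ((m + 2 * Nat.gcd m e - 2) / 2)) := by
  obtain ⟨h, hm⟩ := even_of_gcd_two_mul hgcd
  have lt_half : 2 ^ ((m + 2 * Nat.gcd m e - 2) / 2) < 2 ^ (m - 1) :=
    Nat.pow_lt_pow_right one_lt_two (by omega)
  constructor
  · have count := ncard_goldCode_weight_extremal hF hgcd hlt P (.inl rfl)
    have count_ne_zero : 2 ^ (m - 2 * Nat.gcd m e) * (2 ^ m - 1) ≠ 0 :=
      mul_ne_zero (by positivity) (Nat.sub_ne_zero_of_lt (Nat.one_lt_two_pow (by omega)))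
    obtain ⟨y, hy, hyw⟩ := Set.nonempty_of_ncard_ne_zero
      (right_ne_zero_of_mul (count.trans_ne count_ne_zero))
    refine ⟨y, hy, hammingNorm_ne_zero_iff.1 ?_, hyw⟩
    omega
  · rintro _ ⟨y, hy, hy0, rfl⟩
    have weight_mem := hammingNorm_mem_of_mem_goldCode hF hgcd hlt P hy
    have weight_ne_zero := hammingNorm_ne_zero_iff.2 hy0
    have pow_le : 2 ^ ((m - 2) / 2) ≤ 2 ^ ((m + 2 * Nat.gcd m e - 2) / 2) :=
      Nat.pow_le_pow_right two_pos (by omega)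
    have half_le : 2 ^ (m - 1) ≤ 2 ^ m := Nat.pow_le_pow_right two_pos (by omega)
    simp only [Set.mem_insert_iff, Set.mem_singleton_iff] at weight_mem
    have pow_pos : 0 < 2 ^ ((m - 2) / 2) := Nat.two_pow_pos _
    omega

end WeightDistribution

section DualCode

variable {R K ι : Type*} [CommRing R] [Field K] [Fintype ι] {n : ℕ}

lemma isRefl_dotProductBilin :
    LinearMap.BilinForm.IsRefl (dotProductBilin R R : LinearMap.BilinForm R (ι → R)) :=
  fun x y h => (dotProduct_comm y x).trans h

lemma nondegenerate_dotProductBilin :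
    LinearMap.BilinForm.Nondegenerate (dotProductBilin R R : LinearMap.BilinForm R (ι → R)) :=
  ⟨dotProduct_eq_zero, fun y h => dotProduct_eq_zero y fun x => (dotProduct_comm y x).trans (h x)⟩

lemma dualCode_eq_orthogonal (C : Submodule R (Fin n → R)) :
    dualCode (C : Set (Fin n → R)) = LinearMap.BilinForm.orthogonal (dotProductBilin R R) C := by
  ext y
  exact forall₂_congr fun c _ => by rw [← dotProduct, dotProduct_comm]; rfl

lemma dualCode_dualCode (C : Submodule K (Fin n → K)) :
    dualCode (dualCode (C : Set (Fin n → K)) : Set (Fin n → K)) = C := by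
  rw [dualCode_eq_orthogonal, dualCode_eq_orthogonal,
    LinearMap.BilinForm.orthogonal_orthogonal nondegenerate_dotProductBilin
      isRefl_dotProductBilin]

lemma finrank_dualCode (C : Submodule K (Fin n → K)) :
    Module.finrank K (dualCode (C : Set (Fin n → K))) = n - Module.finrank K C := by
  rw [dualCode_eq_orthogonal, LinearMap.BilinForm.finrank_orthogonal
    nondegenerate_dotProductBilin, Module.finrank_fin_fun]

variable {F : Type*} [Field F] [Finite F] [Algebra (ZMod 2) F]

lemma sum_mul_goldCodeword (e : ℕ) (P : ι → F) (t : (F × F) × ZMod 2) (c : ι → ZMod 2) :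
    ∑ i, c i * goldCodeword e P t i =
      Algebra.traceForm (ZMod 2) F t.1.1 (∑ i, c i • P i ^ (1 + 2 ^ e)) +
        Algebra.traceForm (ZMod 2) F t.1.2 (∑ i, c i • P i) + (∑ i, c i) * t.2 := by
  simp only [goldCodeword, LinearMap.coe_mk, AddHom.coe_mk, goldForm_apply,
    Algebra.traceForm_apply, mul_add, Finset.sum_add_distrib, Finset.sum_mul, map_sum, map_smul,
    smul_eq_mul]

lemma mem_dualCode_goldCode_iff {e : ℕ} {P : Fin n → F} {c : Fin n → ZMod 2} :
    c ∈ dualCode (goldCode e P : Set (Fin n → ZMod 2)) ↔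
      ∑ i, c i • P i = 0 ∧ ∑ i, c i • P i ^ (1 + 2 ^ e) = 0 ∧ ∑ i, c i = 0 := by
  have mem_iff : c ∈ dualCode (goldCode e P : Set (Fin n → ZMod 2)) ↔
      ∀ t, ∑ i, c i * goldCodeword e P t i = 0 := Set.forall_mem_range
  simp only [mem_iff, sum_mul_goldCodeword]
  constructor
  · intro h
    refine ⟨nondegenerate_traceForm.2 _ fun b => ?_, nondegenerate_traceForm.2 _ fun a => ?_, ?_⟩
    · simpa using h ((0, b), 0)
    · simpa using h ((a, 0), 0)
    · simpa using h ((0, 0), 1)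
  · rintro ⟨h1, h2, h3⟩ t
    simp [h1, h2, h3]

end DualCode

section CyclicCode

lemma minpoly_mul_minpoly_dvd_iff {K L : Type*} [Field K] [Field L] [Algebra K L] {α β : L}
    (hα : IsIntegral K α) (hβ : IsIntegral K β) (hne : minpoly K α ≠ minpoly K β) {p : K[X]} :
    minpoly K α * minpoly K β ∣ p ↔ aeval α p = 0 ∧ aeval β p = 0 := by
  rw [← minpoly.dvd_iff, ← minpoly.dvd_iff]
  refine ⟨fun h => ⟨dvd_of_mul_right_dvd h, dvd_of_mul_left_dvd h⟩, fun h => ?_⟩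
  refine IsCoprime.mul_dvd ?_ h.1 h.2
  rw [(minpoly.irreducible hα).coprime_iff_not_dvd]
  exact fun hdvd => hne <| Polynomial.eq_of_monic_of_associated (minpoly.monic hα)
    (minpoly.monic hβ) ((minpoly.irreducible hα).associated_of_dvd (minpoly.irreducible hβ) hdvd)

lemma aeval_codePoly {A : Type*} [Semiring A] [Algebra (ZMod 2) A] {n : ℕ}
    (c : Fin n → ZMod 2) (β : A) : aeval β (codePoly c) = ∑ i, c i • β ^ (i : ℕ) := by
  simp [codePoly, Algebra.smul_def]

/-- The points `1, α, …, α ^ (n - 2), 0`: the last coordinate of the extended code is attached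
to the point `0`. -/
def powersThenZero {F : Type*} [MonoidWithZero F] {n : ℕ} (α : F) (i : Fin n) : F :=
  if (i : ℕ) < n - 1 then α ^ (i : ℕ) else 0

lemma sum_smul_powersThenZero_pow {R F : Type*} [Semiring R] [Semiring F] [Module R F]
    {n k : ℕ} (α : F) (c : Fin n → R) (hk : k ≠ 0) :
    ∑ i, c i • powersThenZero α i ^ k =
      ∑ i : Fin (n - 1), c (Fin.castLE (Nat.sub_le _ _) i) • (α ^ k) ^ (i : ℕ) := by
  rcases n with _ | n
  · simp
  · simp only [Fin.sum_univ_castSucc, powersThenZero, Nat.add_sub_cancel, Fin.val_castSucc,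
      Fin.is_lt, if_true, Fin.val_last, lt_irrefl, if_false, zero_pow hk, smul_zero, add_zero,
      pow_right_comm]
    rfl

variable {F : Type*} [Field F] [Finite F]

lemma bijective_powersThenZero {n : ℕ} {α : F} (hF : Nat.card F = n) (hα : orderOf α = n - 1) :
    Function.Bijective (powersThenZero α : Fin n → F) := by
  have := Fintype.ofFinite F
  have two_le : 1 < n := hF ▸ Finite.one_lt_card
  have α_ne_zero : α ≠ 0 := by
    rintro rfl
    rw [orderOf_zero] at hα
    omega
  rw [Fintype.bijective_iff_injective_and_card]
  refine ⟨fun i j hij => Fin.ext ?_, by rw [← hF, Fintype.card_fin, Nat.card_eq_fintype_card]⟩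
  unfold powersThenZero at hij
  split_ifs at hij with hi hj hj
  · exact pow_injOn_Iio_orderOf (hα ▸ hi) (hα ▸ hj) hij
  · exact absurd hij (pow_ne_zero _ α_ne_zero)
  · exact absurd hij.symm (pow_ne_zero _ α_ne_zero)
  · omega

lemma minpoly_ne_minpoly_pow [Algebra (ZMod 2) F] {m e : ℕ} {α : F} (hF : Nat.card F = 2 ^ m)
    (hlt : Nat.gcd m e < m) (hα : orderOf α = 2 ^ m - 1) :
    minpoly (ZMod 2) α ≠ minpoly (ZMod 2) (α ^ (1 + 2 ^ e)) := by
  have : CharP F 2 := charP_of_injective_algebraMap (algebraMap (ZMod 2) F).injective 2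
  -- A conjugation `α ↦ α ^ (1 + 2 ^ e)` is `x ↦ x ^ (1 + 2 ^ e)` on all of `F`; this is additive
  -- only if `x ↦ x ^ 2 ^ e` is the identity.
  intro h
  obtain ⟨σ, hσ⟩ := (isConjRoot_iff_exists_algEquiv (K := ZMod 2)).1 h.symm
  have σ_eq_pow (x : F) : σ x = x ^ (1 + 2 ^ e) := by
    obtain ⟨i, rfl⟩ := (bijective_powersThenZero hF hα).2 x
    unfold powersThenZero
    split_ifs
    · rw [map_pow, hσ, pow_right_comm]
    · rw [map_zero, zero_pow (Nat.add_pos_left one_pos _).ne']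
  have frobenius_trivial (x : F) : x ^ 2 ^ e = x := by
    have additive := map_add σ x 1
    simp only [σ_eq_pow, pow_add _ 1, add_pow_char_pow, pow_one, one_pow, mul_one] at additive
    rw [← CharTwo.add_eq_zero]
    linear_combination additive
  have card_eq := ncard_pow_pow_eq_self hF e
  rw [Set.eq_univ_of_forall (s := {z : F | z ^ 2 ^ e = z}) frobenius_trivial, Set.ncard_univ,
    hF] at card_eq
  exact hlt.ne' (Nat.pow_right_injective le_rfl card_eq)

variable {m e : ℕ} {α : GaloisField 2 m}

lemma CEbarSub_eq_dualCode_goldCode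
    (hne : minpoly (ZMod 2) α ≠ minpoly (ZMod 2) (α ^ (1 + 2 ^ e))) :
    CEbarSub m e α =
      dualCode (goldCode e (powersThenZero (n := 2 ^ m) α) : Set (Fin (2 ^ m) → ZMod 2)) := by
  ext c
  have first_check := sum_smul_powersThenZero_pow α c one_ne_zero
  simp only [pow_one] at first_check
  rw [mem_dualCode_goldCode_iff, first_check,
    sum_smul_powersThenZero_pow α c (Nat.add_pos_left one_pos _).ne', ← and_assoc,
    ← aeval_codePoly, ← aeval_codePoly, ← minpoly_mul_minpoly_dvd_iff
      (Algebra.IsIntegral.isIntegral α) (Algebra.IsIntegral.isIntegral _) hne]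
  rfl

lemma dualCode_CEbar (hne : minpoly (ZMod 2) α ≠ minpoly (ZMod 2) (α ^ (1 + 2 ^ e))) :
    dualCode (CEbar m e α) = goldCode e (powersThenZero α) := by
  have CEbar_eq := congrArg SetLike.coe (CEbarSub_eq_dualCode_goldCode hne)
  exact (congrArg dualCode CEbar_eq).trans (dualCode_dualCode _)

end CyclicCode

section MinimumDistance

lemma sum_symmDiff_of_charTwo {ι R : Type*} [DecidableEq ι] [Ring R] [CharP R 2]
    (S T : Finset ι) (f : ι → R) : ∑ x ∈ symmDiff S T, f x = ∑ x ∈ S, f x + ∑ x ∈ T, f x := by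
  rw [← Finset.sum_sdiff (Finset.inter_subset_left (s₁ := S) (s₂ := T)),
    ← Finset.sum_sdiff (Finset.inter_subset_right (s₁ := S) (s₂ := T)),
    Finset.sdiff_inter_self_left, Finset.sdiff_inter_self_right, add_add_add_comm,
    CharTwo.add_self_eq_zero, add_zero]
  exact Finset.sum_union disjoint_sdiff_sdiff

lemma sq_lt_choose_three {n : ℕ} (hn : 9 ≤ n) : n ^ 2 < n.choose 3 := by
  obtain ⟨k, rfl⟩ : ∃ k, n = k + 2 := ⟨n - 2, by omega⟩
  have desc : (k + 2) * ((k + 1) * k) = 6 * (k + 2).choose 3 := by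
    have := Nat.descFactorial_eq_factorial_mul_choose (k + 2) 3
    rwa [Nat.succ_descFactorial_succ, Nat.succ_descFactorial_succ, Nat.descFactorial_one] at this
  nlinarith

variable {F : Type*} [Field F] {e : ℕ}

/-- The subsets `S` of `F` whose indicator function satisfies the parity checks of the dual of
`goldCode`. -/
def IsCheckSet (e : ℕ) (S : Finset F) : Prop :=
  ∑ x ∈ S, x = 0 ∧ ∑ x ∈ S, x ^ (1 + 2 ^ e) = 0 ∧ Even #S

lemma mem_dualCode_goldCode_iff_isCheckSet [Finite F] [Algebra (ZMod 2) F] {n : ℕ}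
    (P : Fin n ≃ F) {c : Fin n → ZMod 2} :
    c ∈ dualCode (goldCode e P : Set (Fin n → ZMod 2)) ↔
      IsCheckSet e (Finset.map P.toEmbedding {i | c i ≠ 0}) := by
  have smul_eq_ite (a : ZMod 2) (x : F) : a • x = if a ≠ 0 then x else 0 := by
    obtain rfl | rfl : a = 0 ∨ a = 1 := by revert a; decide
    all_goals simp
  have eq_ite : ∀ a : ZMod 2, a = if a ≠ 0 then 1 else 0 := by decide
  have sum_eq_card : ∑ i, c i = #{i | c i ≠ 0} := by
    rw [Finset.sum_congr rfl fun i _ => eq_ite (c i), Finset.sum_boole]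
  rw [mem_dualCode_goldCode_iff, IsCheckSet, Finset.sum_map, Finset.sum_map, Finset.card_map,
    Finset.sum_filter, Finset.sum_filter, sum_eq_card, ZMod.natCast_eq_zero_iff_even]
  simp only [smul_eq_ite, Equiv.coe_toEmbedding]

lemma weights_dualCode_goldCode [Finite F] [Algebra (ZMod 2) F] {n : ℕ} (P : Fin n ≃ F) :
    {i | ∃ c ∈ dualCode (goldCode e P : Set (Fin n → ZMod 2)), c ≠ 0 ∧ hammingNorm c = i} =
      {i | ∃ S : Finset F, IsCheckSet e S ∧ S.Nonempty ∧ #S = i} := by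
  classical
  ext i
  constructor
  · rintro ⟨c, hc, c_ne_zero, rfl⟩
    refine ⟨_, (mem_dualCode_goldCode_iff_isCheckSet P).1 hc, ?_, Finset.card_map _⟩
    rw [Finset.map_nonempty, ← Finset.card_ne_zero]
    exact hammingNorm_ne_zero_iff.2 c_ne_zero
  · rintro ⟨S, hS, S_nonempty, rfl⟩
    let c : Fin n → ZMod 2 := fun i => if P i ∈ S then 1 else 0
    have support_c : Finset.map P.toEmbedding {i | c i ≠ 0} = S := by
      ext x
      simp [c, Finset.mem_map_equiv]
    have weight_c : hammingNorm c = #S := by rw [← support_c, Finset.card_map, hammingNorm]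
    refine ⟨c, (mem_dualCode_goldCode_iff_isCheckSet P).2 (by rwa [support_c]), ?_, weight_c⟩
    rw [← hammingNorm_ne_zero_iff, weight_c]
    exact S_nonempty.card_pos.ne'

variable [CharP F 2] {S : Finset F}

lemma IsCheckSet.four_le_card (hS : IsCheckSet e S) (hne : S.Nonempty) : 4 ≤ #S := by
  classical
  obtain ⟨sum_eq_zero, -, even_card⟩ := hS
  have card_ne_two : #S ≠ 2 := fun h => by
    obtain ⟨x, y, hxy, rfl⟩ := Finset.card_eq_two.1 h
    rw [Finset.sum_pair hxy, CharTwo.add_eq_zero] at sum_eq_zero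
    exact hxy sum_eq_zero
  have card_pos := hne.card_pos
  obtain ⟨k, hk⟩ := even_card
  omega

lemma exists_isCheckSet_card_eq_four {u : F} (hu : u ^ 2 ^ e = u) (hu0 : u ≠ 0) (hu1 : u ≠ 1) :
    ∃ S : Finset F, IsCheckSet e S ∧ #S = 4 := by
  classical
  have zero_notMem : (0 : F) ∉ ({1, u, u + 1} : Finset F) := by
    simp [hu0.symm, eq_comm (a := (0 : F)), CharTwo.add_eq_zero, hu1]
  have one_notMem : (1 : F) ∉ ({u, u + 1} : Finset F) := by simp [hu0, hu1.symm]
  have notMem : u ∉ ({u + 1} : Finset F) := by simp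
  have two_eq_zero : (2 : F) = 0 := CharTwo.two_eq_zero
  have card_eq : #{0, 1, u, u + 1} = 4 := by
    rw [Finset.card_insert_of_notMem zero_notMem, Finset.card_insert_of_notMem one_notMem,
      Finset.card_insert_of_notMem notMem, Finset.card_singleton]
  refine ⟨{0, 1, u, u + 1}, ⟨?_, ?_, card_eq ▸ by decide⟩, card_eq⟩
  · rw [Finset.sum_insert zero_notMem, Finset.sum_insert one_notMem, Finset.sum_insert notMem,
      Finset.sum_singleton]
    linear_combination (u + 1) * two_eq_zero
  · rw [Finset.sum_insert zero_notMem, Finset.sum_insert one_notMem, Finset.sum_insert notMem,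
      Finset.sum_singleton]
    simp only [pow_add _ 1, add_pow_char_pow, hu, pow_one, one_pow, mul_one, zero_mul, zero_add]
    linear_combination (u ^ 2 + u + 1) * two_eq_zero

lemma IsCheckSet.six_le_card (hfix : ∀ z : F, z ^ 2 ^ e = z → z = 0 ∨ z = 1)
    (hS : IsCheckSet e S) (hne : S.Nonempty) : 6 ≤ #S := by
  classical
  have four_le := hS.four_le_card hne
  obtain ⟨sum_eq_zero, sum_pow_eq_zero, even_card⟩ := hS
  have two_eq_zero : (2 : F) = 0 := CharTwo.two_eq_zero
  have card_ne_four : #S ≠ 3 + 1 := fun h => by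
    obtain ⟨x, T, hxT, rfl, hT⟩ := Finset.card_eq_succ.1 h
    obtain ⟨y, z, w, hyz, hyw, hzw, rfl⟩ := Finset.card_eq_three.1 hT
    rw [Finset.sum_insert hxT, Finset.sum_insert (by simp [hyz, hyw]), Finset.sum_pair hzw]
      at sum_eq_zero sum_pow_eq_zero
    -- With `w` as origin, the two power sums of `{x, y, z, w}` vanish only if
    -- `(y + w) / (z + w)` is fixed by `t ↦ t ^ 2 ^ e`.
    have zw_ne_zero : z + w ≠ 0 := mt CharTwo.add_eq_zero.1 hzw
    have yw_ne_zero : y + w ≠ 0 := mt CharTwo.add_eq_zero.1 hyw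
    rw [CharTwo.add_eq_zero] at sum_eq_zero
    have cross_mul : (y + w) ^ 2 ^ e * (z + w) = (y + w) * (z + w) ^ 2 ^ e := by
      rw [← CharTwo.add_eq_zero, ← sum_pow_eq_zero, sum_eq_zero]
      simp only [pow_add _ 1, add_pow_char_pow, pow_one]
      linear_combination (- y * y ^ 2 ^ e - z * z ^ 2 ^ e) * two_eq_zero
    have ratio_fixed : ((y + w) / (z + w)) ^ 2 ^ e = (y + w) / (z + w) := by
      rw [div_pow, div_eq_div_iff (pow_ne_zero _ zw_ne_zero) zw_ne_zero, cross_mul]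
    rcases hfix _ ratio_fixed with h | h
    · exact div_ne_zero yw_ne_zero zw_ne_zero h
    · exact hyz (add_right_cancel ((div_eq_one_iff_eq zw_ne_zero).1 h))
  obtain ⟨k, hk⟩ := even_card
  omega

lemma exists_isCheckSet_card_le_six [Fintype F] (hF : 9 ≤ Fintype.card F) (e : ℕ) :
    ∃ S : Finset F, IsCheckSet e S ∧ S.Nonempty ∧ #S ≤ 6 := by
  classical
  have pigeonhole : #(univ : Finset (F × F)) < #(powersetCard 3 (univ : Finset F)) := by
    rw [Finset.card_powersetCard, Finset.card_univ, Finset.card_univ, Fintype.card_prod, ← sq]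
    exact sq_lt_choose_three hF
  obtain ⟨S, hS, T, hT, hne, heq⟩ := Finset.exists_ne_map_eq_of_card_lt_of_maps_to pigeonhole
    (f := fun S : Finset F => (∑ x ∈ S, x, ∑ x ∈ S, x ^ (1 + 2 ^ e))) fun _ _ => by simp
  rw [Finset.mem_powersetCard] at hS hT
  obtain ⟨sum_eq, sum_pow_eq⟩ := Prod.mk.inj heq
  have card_eq : #(symmDiff S T) = #(S \ T) + #(T \ S) :=
    Finset.card_union_of_disjoint disjoint_sdiff_sdiff
  have card_left := Finset.card_sdiff_add_card_inter S T
  have card_right := Finset.card_sdiff_add_card_inter T S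
  rw [Finset.inter_comm] at card_right
  refine ⟨symmDiff S T, ⟨?_, ?_, #(S \ T), by omega⟩, Finset.symmDiff_nonempty.2 hne, by omega⟩
  · rw [sum_symmDiff_of_charTwo, sum_eq, CharTwo.add_self_eq_zero]
  · rw [sum_symmDiff_of_charTwo, sum_pow_eq, CharTwo.add_self_eq_zero]

end MinimumDistance

section MinimumWeight

variable {F : Type*} [Field F] [Finite F] [Algebra (ZMod 2) F] {m e n : ℕ}

lemma isLeast_weight_dualCode_goldCode_four (hF : Nat.card F = 2 ^ m)
    (hgcd : 1 < Nat.gcd m e) (P : Fin n ≃ F) :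
    IsLeast {i | ∃ c ∈ dualCode (goldCode e P : Set (Fin n → ZMod 2)),
      c ≠ 0 ∧ hammingNorm c = i} 4 := by
  have : CharP F 2 := charP_of_injective_algebraMap (algebraMap (ZMod 2) F).injective 2
  rw [weights_dualCode_goldCode]
  constructor
  · have lt_card : ({0, 1} : Set F).ncard < {z : F | z ^ 2 ^ e = z}.ncard := by
      rw [ncard_pow_pow_eq_self hF, Set.ncard_pair zero_ne_one]
      exact Nat.pow_lt_pow_right one_lt_two hgcd
    obtain ⟨u, hu, hu'⟩ := Set.exists_mem_notMem_of_ncard_lt_ncard lt_card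
    rw [Set.mem_insert_iff, Set.mem_singleton_iff, not_or] at hu'
    obtain ⟨S, hS, card_S⟩ := exists_isCheckSet_card_eq_four hu hu'.1 hu'.2
    exact ⟨S, hS, Finset.card_pos.1 (card_S ▸ four_pos), card_S⟩
  · rintro _ ⟨S, hS, hne, rfl⟩
    exact hS.four_le_card hne

lemma isLeast_weight_dualCode_goldCode_six (hF : Nat.card F = 2 ^ m) (hm : 4 ≤ m)
    (hgcd : Nat.gcd m e = 1) (P : Fin n ≃ F) :
    IsLeast {i | ∃ c ∈ dualCode (goldCode e P : Set (Fin n → ZMod 2)),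
      c ≠ 0 ∧ hammingNorm c = i} 6 := by
  have := Fintype.ofFinite F
  have : CharP F 2 := charP_of_injective_algebraMap (algebraMap (ZMod 2) F).injective 2
  have fixed_eq : {0, 1} = {z : F | z ^ 2 ^ e = z} := by
    refine Set.eq_of_subset_of_ncard_le ?_ ?_
    · simp [Set.insert_subset_iff]
    · rw [ncard_pow_pow_eq_self hF, hgcd, Set.ncard_pair zero_ne_one, pow_one]
  have six_le {S : Finset F} (hS : IsCheckSet e S) : S.Nonempty → 6 ≤ #S :=
    hS.six_le_card fun z hz => fixed_eq.ge hz
  rw [weights_dualCode_goldCode]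
  constructor
  · have nine_le : 9 ≤ Fintype.card F := by
      rw [← Nat.card_eq_fintype_card, hF]
      exact le_trans (by norm_num) (Nat.pow_le_pow_right two_pos hm)
    obtain ⟨S, hS, hne, le_six⟩ := exists_isCheckSet_card_le_six nine_le e
    exact ⟨S, hS, hne, le_six.antisymm (six_le hS hne)⟩
  · rintro _ ⟨S, hS, hne, rfl⟩
    exact six_le hS hne

end MinimumWeight

theorem dual_code_parameters_case_c_general
    (m e l : ℕ) (hlt : 2 * Nat.gcd m e < m) (heven : Even (m / Nat.gcd m e))
    (hl : l = 2 * Nat.gcd m e) (α : GaloisField 2 m) (hα : orderOf α = 2 ^ m - 1) :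
    Module.finrank (ZMod 2) ↥(dualCode (CEbar m e α)) = 2 * m + 1 ∧
    IsLeast {i | ∃ y ∈ dualCode (CEbar m e α), y ≠ 0 ∧ hammingNorm y = i}
      (2 ^ (m - 1) - 2 ^ ((m + l - 2) / 2)) ∧
    {y : Fin (2 ^ m) → ZMod 2 |
      y ∈ dualCode (CEbar m e α) ∧ hammingNorm y = 0}.ncard = 1 ∧
    (2 ^ (l / 2) + 1) * {y : Fin (2 ^ m) → ZMod 2 | y ∈ dualCode (CEbar m e α) ∧
      hammingNorm y = 2 ^ (m - 1) - 2 ^ ((m + l - 2) / 2)}.ncard =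
        2 ^ (m - l) * (2 ^ m - 1) ∧
    (2 ^ (l / 2) + 1) * {y : Fin (2 ^ m) → ZMod 2 | y ∈ dualCode (CEbar m e α) ∧
      hammingNorm y = 2 ^ (m - 1) - 2 ^ ((m - 2) / 2)}.ncard =
        2 ^ ((2 * m + l) / 2) * (2 ^ m - 1) ∧
    {y : Fin (2 ^ m) → ZMod 2 | y ∈ dualCode (CEbar m e α) ∧
      hammingNorm y = 2 ^ (m - 1)}.ncard =
        2 * ((2 ^ (l / 2) - 1) * 2 ^ (m - l) + 1) * (2 ^ m - 1) ∧
    (2 ^ (l / 2) + 1) * {y : Fin (2 ^ m) → ZMod 2 | y ∈ dualCode (CEbar m e α) ∧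
      hammingNorm y = 2 ^ (m - 1) + 2 ^ ((m - 2) / 2)}.ncard =
        2 ^ ((2 * m + l) / 2) * (2 ^ m - 1) ∧
    (2 ^ (l / 2) + 1) * {y : Fin (2 ^ m) → ZMod 2 | y ∈ dualCode (CEbar m e α) ∧
      hammingNorm y = 2 ^ (m - 1) + 2 ^ ((m + l - 2) / 2)}.ncard =
        2 ^ (m - l) * (2 ^ m - 1) ∧
    {y : Fin (2 ^ m) → ZMod 2 | y ∈ dualCode (CEbar m e α) ∧
      hammingNorm y = 2 ^ m}.ncard = 1 ∧
    (∀ y ∈ dualCode (CEbar m e α), hammingNorm y ∈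
      ({0, 2 ^ (m - 1) - 2 ^ ((m + l - 2) / 2), 2 ^ (m - 1) - 2 ^ ((m - 2) / 2),
        2 ^ (m - 1), 2 ^ (m - 1) + 2 ^ ((m - 2) / 2),
        2 ^ (m - 1) + 2 ^ ((m + l - 2) / 2), 2 ^ m} : Set ℕ)) ∧
    Module.finrank (ZMod 2) ↥(CEbarSub m e α) = 2 ^ m - 1 - 2 * m ∧
    (1 < Nat.gcd e m →
      IsLeast {i | ∃ c ∈ CEbar m e α, c ≠ 0 ∧ hammingNorm c = i} 4) ∧
    (Nat.gcd e m = 1 →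
      IsLeast {i | ∃ c ∈ CEbar m e α, c ≠ 0 ∧ hammingNorm c = i} 6) := by
  subst hl
  have hF : Nat.card (GaloisField 2 m) = 2 ^ m := GaloisField.card 2 m (by omega)
  have hgcd := gcd_two_mul_of_even_div heven
  have hne := minpoly_ne_minpoly_pow (e := e) hF (by omega) hα
  let P : Fin (2 ^ m) ≃ GaloisField 2 m := Equiv.ofBijective _ (bijective_powersThenZero hF hα)
  have dual_eq : dualCode (CEbar m e α) = goldCode e P := dualCode_CEbar hne
  have code_eq : CEbarSub m e α = dualCode (goldCode e P : Set (Fin (2 ^ m) → ZMod 2)) :=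
    CEbarSub_eq_dualCode_goldCode hne
  have CEbar_eq : CEbar m e α = dualCode (goldCode e P : Set (Fin (2 ^ m) → ZMod 2)) :=
    congrArg SetLike.coe code_eq
  have finrank_gold := finrank_goldCode hF (hgcd.trans_lt hlt) P
  have four_le := four_le_of_even_div heven hlt
  have exponent : (2 * m + 2 * Nat.gcd m e) / 2 = m + Nat.gcd m e := by omega
  rw [dual_eq, code_eq, CEbar_eq, finrank_dualCode, finrank_gold, exponent,
    Nat.mul_div_cancel_left _ two_pos, Nat.gcd_comm e m]
  exact ⟨rfl, isLeast_weight_goldCode hF hgcd hlt P,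
    ncard_goldCode_weight_trivial hF (hgcd.trans_lt hlt) P (.inl rfl),
    ncard_goldCode_weight_extremal hF hgcd hlt P (.inl rfl),
    ncard_goldCode_weight_intermediate hF hgcd hlt P (.inl rfl),
    ncard_goldCode_weight_half hF hgcd hlt P,
    ncard_goldCode_weight_intermediate hF hgcd hlt P (.inr rfl),
    ncard_goldCode_weight_extremal hF hgcd hlt P (.inr rfl),
    ncard_goldCode_weight_trivial hF (hgcd.trans_lt hlt) P (.inr rfl),
    fun y hy => hammingNorm_mem_of_mem_goldCode hF hgcd hlt P hy, by omega,
    fun h => isLeast_weight_dualCode_goldCode_four hF h P,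
    fun h => isLeast_weight_dualCode_goldCode_six hF four_le h P⟩

/-- Let `m ≥ 4`, `1 ≤ e < m/2` with `m/gcd(m,e)` even, and
`ℓ = 2·gcd(m,e)`. Then `C̄_E^⊥` has dimension `2m + 1`, minimum nonzero weight
`2^{m−1} − 2^{(m+ℓ−2)/2}`, and the stated weight distribution (counts divided by
`2^{ℓ/2} + 1` are stated multiplied through), with no codewords of other weights;
moreover `C̄_E` has dimension `2^m − 1 − 2m` and minimum nonzero weight `4` if
`gcd(e,m) > 1` and `6` if `gcd(e,m) = 1`. -/
theorem dual_code_parameters_case_c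
    (m e l : ℕ) (hm : 4 ≤ m) (he1 : 1 ≤ e) (he : 2 * e < m)
    (heven : Even (m / Nat.gcd m e)) (hl : l = 2 * Nat.gcd m e)
    (α : GaloisField 2 m) (hα : orderOf α = 2 ^ m - 1) :
    Module.finrank (ZMod 2) ↥(dualCode (CEbar m e α)) = 2 * m + 1 ∧
    IsLeast {i | ∃ y ∈ dualCode (CEbar m e α), y ≠ 0 ∧ hammingNorm y = i}
      (2 ^ (m - 1) - 2 ^ ((m + l - 2) / 2)) ∧
    {y : Fin (2 ^ m) → ZMod 2 |
      y ∈ dualCode (CEbar m e α) ∧ hammingNorm y = 0}.ncard = 1 ∧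
    (2 ^ (l / 2) + 1) * {y : Fin (2 ^ m) → ZMod 2 | y ∈ dualCode (CEbar m e α) ∧
      hammingNorm y = 2 ^ (m - 1) - 2 ^ ((m + l - 2) / 2)}.ncard =
        2 ^ (m - l) * (2 ^ m - 1) ∧
    (2 ^ (l / 2) + 1) * {y : Fin (2 ^ m) → ZMod 2 | y ∈ dualCode (CEbar m e α) ∧
      hammingNorm y = 2 ^ (m - 1) - 2 ^ ((m - 2) / 2)}.ncard =
        2 ^ ((2 * m + l) / 2) * (2 ^ m - 1) ∧
    {y : Fin (2 ^ m) → ZMod 2 | y ∈ dualCode (CEbar m e α) ∧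
      hammingNorm y = 2 ^ (m - 1)}.ncard =
        2 * ((2 ^ (l / 2) - 1) * 2 ^ (m - l) + 1) * (2 ^ m - 1) ∧
    (2 ^ (l / 2) + 1) * {y : Fin (2 ^ m) → ZMod 2 | y ∈ dualCode (CEbar m e α) ∧
      hammingNorm y = 2 ^ (m - 1) + 2 ^ ((m - 2) / 2)}.ncard =
        2 ^ ((2 * m + l) / 2) * (2 ^ m - 1) ∧
    (2 ^ (l / 2) + 1) * {y : Fin (2 ^ m) → ZMod 2 | y ∈ dualCode (CEbar m e α) ∧
      hammingNorm y = 2 ^ (m - 1) + 2 ^ ((m + l - 2) / 2)}.ncard =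
        2 ^ (m - l) * (2 ^ m - 1) ∧
    {y : Fin (2 ^ m) → ZMod 2 | y ∈ dualCode (CEbar m e α) ∧
      hammingNorm y = 2 ^ m}.ncard = 1 ∧
    (∀ y ∈ dualCode (CEbar m e α), hammingNorm y ∈
      ({0, 2 ^ (m - 1) - 2 ^ ((m + l - 2) / 2), 2 ^ (m - 1) - 2 ^ ((m - 2) / 2),
        2 ^ (m - 1), 2 ^ (m - 1) + 2 ^ ((m - 2) / 2),
        2 ^ (m - 1) + 2 ^ ((m + l - 2) / 2), 2 ^ m} : Set ℕ)) ∧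
    Module.finrank (ZMod 2) ↥(CEbarSub m e α) = 2 ^ m - 1 - 2 * m ∧
    (1 < Nat.gcd e m →
      IsLeast {i | ∃ c ∈ CEbar m e α, c ≠ 0 ∧ hammingNorm c = i} 4) ∧
    (Nat.gcd e m = 1 →
      IsLeast {i | ∃ c ∈ CEbar m e α, c ≠ 0 ∧ hammingNorm c = i} 6) := by
  exact dual_code_parameters_case_c_general m e l
    ((Nat.mul_le_mul_left 2 (Nat.gcd_le_right m he1)).trans_lt he) heven hl α hα
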